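/- Let z₁, z₂, z₃ be nonzero complex numbers with z₁z₂z₃ = 1 and let n₁ ≥ n₂ ≥ n₃ ≥ 1 be integers. For j = 1, 2, 3 set A_j = ℂ[t^{±1}]/((t − z_j)^{n_j}) and let η_j ∈ A_j be the class of 1. Let V = (A₁ ⊗_ℂ A₂ ⊗_ℂ A₃)/H. Then V is spanned over ℂ by the classes of the elements η₁ ⊗ (t − z₂)^{k₂}η₂ ⊗ (t − z₃)^{k₃}η₃ for 0 ≤ k₂ < n₂ and 0 ≤ k₃ < n₃. Moreover, if n₂ + n₃ ≤ n₁ + 1, this family is a basis of V, and hence dim_ℂ V = n₂n₃. -/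

import Mathlib

open LaurentPolynomial TensorProduct

set_option synthInstance.maxHeartbeats 1000000
set_option maxHeartbeats 1000000
set_option maxSynthPendingDepth 3
noncomputable section

abbrev LQuot (K : Type) [Field K] (p : LaurentPolynomial K) : Type :=
  LaurentPolynomial K ⧸ Ideal.span {p}

/-- The class of a Laurent polynomial in the quotient by `(p)`. -/
def clsOf (K : Type) [Field K] (p x : LaurentPolynomial K) : LQuot K p :=
  Ideal.Quotient.mk (Ideal.span {p}) x

abbrev Trip (K : Type) [Field K] (p q r : LaurentPolynomial K) : Type :=
  (LQuot K p ⊗[K] LQuot K q) ⊗[K] LQuot K r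

/-- The holonomy subspace: the `K`-span of the elements
`β₁ ⊗ β₂ ⊗ β₃ - tβ₁ ⊗ tβ₂ ⊗ tβ₃`. -/
def holSub (K : Type) [Field K] (p q r : LaurentPolynomial K) :
    Submodule K (Trip K p q r) :=
  Submodule.span K { x | ∃ (a : LQuot K p) (b : LQuot K q) (c : LQuot K r),
    x = (a ⊗ₜ[K] b) ⊗ₜ[K] c -
      (((T 1 : LaurentPolynomial K) • a) ⊗ₜ[K] ((T 1 : LaurentPolynomial K) • b)) ⊗ₜ[K]
        ((T 1 : LaurentPolynomial K) • c) }

/-- The class of `(t-z₁)^{k₁}η₁ ⊗ (t-z₂)^{k₂}η₂ ⊗ (t-z₃)^{k₃}η₃` in the quotient of the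
triple tensor product by the holonomy subspace. -/
def genElt (z₁ z₂ z₃ : ℂ) (n₁ n₂ n₃ : ℕ) (k₁ k₂ k₃ : ℕ) :
    Trip ℂ ((T 1 - C z₁) ^ n₁) ((T 1 - C z₂) ^ n₂) ((T 1 - C z₃) ^ n₃) ⧸
      holSub ℂ ((T 1 - C z₁) ^ n₁) ((T 1 - C z₂) ^ n₂) ((T 1 - C z₃) ^ n₃) :=
  Submodule.Quotient.mk
    ((clsOf ℂ ((T 1 - C z₁) ^ n₁) ((T 1 - C z₁) ^ k₁) ⊗ₜ[ℂ]
        clsOf ℂ ((T 1 - C z₂) ^ n₂) ((T 1 - C z₂) ^ k₂)) ⊗ₜ[ℂ]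
      clsOf ℂ ((T 1 - C z₃) ^ n₃) ((T 1 - C z₃) ^ k₃))

/-!
The holonomy subspace is the ideal of `A₁ ⊗ A₂ ⊗ A₃` generated by `1 - t ⊗ t ⊗ t`, so the quotient
`V` is a ring, in which `t ⊗ 1 ⊗ 1` is the inverse of `1 ⊗ t ⊗ t`. As `A₁` is generated by
`t` and `t⁻¹`, the map `A₂ ⊗ A₃ → V`, `y ⊗ z ↦ 1 ⊗ y ⊗ z`, is surjective. If moreover `(t ⊗ t)⁻¹`
satisfies the relation that defines `A₁`, then `t ↦ (t ⊗ t)⁻¹` is a homomorphism `A₁ → A₂ ⊗ A₃`,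
and it induces a retraction `V → A₂ ⊗ A₃`. For `z₁ z₂ z₃ = 1` the difference `(t ⊗ t)⁻¹ - z₁` is a
combination of the nilpotent elements `t ⊗ 1 - z₂` and `1 ⊗ t - z₃`, so its `n₁`-th power vanishes
when `n₂ + n₃ ≤ n₁ + 1`.
-/

theorem sub_pow_eq_zero_of_mul_mul_eq_one {S : Type*} [CommRing S] {s₁ s₂ s₃ w₁ w₂ w₃ : S}
    (hs : s₁ * (s₂ * s₃) = 1) (hw : w₁ * w₂ * w₃ = 1) {n₁ n₂ n₃ : ℕ}
    (h₂ : (s₂ - w₂) ^ n₂ = 0) (h₃ : (s₃ - w₃) ^ n₃ = 0) (hn : n₂ + n₃ ≤ n₁ + 1) :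
    (s₁ - w₁) ^ n₁ = 0 := by
  have hsub : s₁ - w₁ = (-s₁ * w₁ * s₃) * (s₂ - w₂) + (-s₁ * w₁ * w₂) * (s₃ - w₃) := by
    linear_combination (-s₁) * hw + w₁ * hs
  rw [hsub]
  exact (Commute.all _ _).add_pow_eq_zero_of_add_le_succ_of_pow_eq_zero
    (by rw [mul_pow, h₂, mul_zero]) (by rw [mul_pow, h₃, mul_zero]) hn

theorem eq_top_of_forall_tmul_tmul_mem {R M₁ M₂ M₃ : Type*} [CommRing R] [AddCommGroup M₁]
    [Module R M₁] [AddCommGroup M₂] [Module R M₂] [AddCommGroup M₃] [Module R M₃]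
    {N : Submodule R ((M₁ ⊗[R] M₂) ⊗[R] M₃)} (h : ∀ x y z, (x ⊗ₜ y) ⊗ₜ z ∈ N) : N = ⊤ := by
  have hmkQ : N.mkQ = 0 :=
    TensorProduct.ext_threefold fun x y z ↦ (Submodule.Quotient.mk_eq_zero N).2 (h x y z)
  rw [← N.ker_mkQ, hmkQ, LinearMap.ker_zero]

section LaurentAeval

variable {R S : Type*} [CommSemiring R] [CommSemiring S] [Algebra R S]

/-- Evaluation of Laurent polynomials at a unit `u`, as an algebra homomorphism
`R[t^{±1}] → S`, `t ↦ u`. -/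
def laurentAeval (u : Sˣ) : R[T;T⁻¹] →ₐ[R] S :=
  { LaurentPolynomial.eval₂ (algebraMap R S) u with
    commutes' := LaurentPolynomial.eval₂_C _ _ }

@[simp]
theorem laurentAeval_T_one (u : Sˣ) : laurentAeval u (T 1 : R[T;T⁻¹]) = u :=
  (LaurentPolynomial.eval₂_T _ _ _).trans (by rw [zpow_one])

@[simp]
theorem laurentAeval_C (u : Sˣ) (z : R) : laurentAeval u (C z) = algebraMap R S z :=
  LaurentPolynomial.eval₂_C _ _ _

theorem laurent_algHom_ext {f g : R[T;T⁻¹] →ₐ[R] S} (h : f (T 1) = g (T 1)) : f = g :=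
  AddMonoidAlgebra.algHom_ext' (MonoidHom.ext_mint h) (Subsingleton.elim _ _)

end LaurentAeval

section LQuot

variable {K : Type} [Field K] {S : Type*} [CommRing S] [Algebra K S]

/-- The class of `t` in `K[t^{±1}]/(p)`, as a unit. -/
def lquotT (p : K[T;T⁻¹]) : (LQuot K p)ˣ :=
  Units.map (Ideal.Quotient.mk (Ideal.span {p})).toMonoidHom (unitOfInvertible (T 1))

theorem T_one_smul_eq_lquotT_mul (p : K[T;T⁻¹]) (x : LQuot K p) :
    (T 1 : K[T;T⁻¹]) • x = lquotT p * x :=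
  rfl

theorem clsOf_T_one_sub_C (p : K[T;T⁻¹]) (z : K) :
    clsOf K p (T 1 - C z) = lquotT p - algebraMap K (LQuot K p) z :=
  rfl

theorem clsOf_T_one_sub_C_pow_self (z : K) (n : ℕ) :
    clsOf K ((T 1 - C z) ^ n) (T 1 - C z) ^ n = 0 := by
  rw [clsOf, ← map_pow]
  exact Ideal.Quotient.mk_singleton_self _

theorem lquot_algHom_ext {p : K[T;T⁻¹]} {f g : LQuot K p →ₐ[K] S}
    (h : f (lquotT p) = g (lquotT p)) : f = g :=
  Ideal.Quotient.algHom_ext K (laurent_algHom_ext h)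

/-- The homomorphism `K[t^{±1}]/(p) → S`, `t ↦ u`, for a unit `u` of `S` with `p(u) = 0`. -/
def lquotLift (p : K[T;T⁻¹]) (u : Sˣ) (hu : laurentAeval u p = 0) : LQuot K p →ₐ[K] S :=
  Ideal.Quotient.liftₐ _ (laurentAeval u) fun x hx ↦ by
    obtain ⟨y, rfl⟩ := Ideal.mem_span_singleton'.1 hx
    rw [map_mul, hu, mul_zero]

@[simp]
theorem lquotLift_lquotT (p : K[T;T⁻¹]) (u : Sˣ) (hu : laurentAeval u p = 0) :
    lquotLift p u hu (lquotT p) = u :=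
  laurentAeval_T_one u

theorem root_X_pow_pow_eq_zero (n : ℕ) :
    AdjoinRoot.root (Polynomial.X ^ n : Polynomial K) ^ n = 0 := by
  rw [← AdjoinRoot.mk_X, ← map_pow, AdjoinRoot.mk_self]

theorem isUnit_root_X_pow_add {z : K} (hz : z ≠ 0) (n : ℕ) :
    IsUnit (AdjoinRoot.root (Polynomial.X ^ n : Polynomial K) + algebraMap K _ z) :=
  IsNilpotent.isUnit_add_right_of_commute ⟨n, root_X_pow_pow_eq_zero n⟩
    ((IsUnit.mk0 z hz).map _) (Commute.all _ _)

/-- The isomorphism `K[X]/(X ^ n) ≃ K[t^{±1}]/((t - z) ^ n)`, `X ↦ t - z`. -/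
def adjoinRootEquivLQuot {z : K} (hz : z ≠ 0) (n : ℕ) :
    AdjoinRoot (Polynomial.X ^ n : Polynomial K) ≃ₐ[K] LQuot K ((T 1 - C z) ^ n) :=
  AlgEquiv.ofAlgHom
    (AdjoinRoot.liftAlgHom _ (Algebra.ofId K _) (clsOf K _ (T 1 - C z)) (by
      rw [Polynomial.eval₂_pow, Polynomial.eval₂_X, clsOf_T_one_sub_C_pow_self]))
    (lquotLift _ (isUnit_root_X_pow_add hz n).unit (by
      rw [map_pow, map_sub, laurentAeval_T_one, laurentAeval_C, IsUnit.unit_spec,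
        add_sub_cancel_right, root_X_pow_pow_eq_zero]))
    (lquot_algHom_ext (by simp [clsOf_T_one_sub_C]))
    (AdjoinRoot.algHom_ext (by simp [clsOf_T_one_sub_C]))

theorem adjoinRootEquivLQuot_root {z : K} (hz : z ≠ 0) (n : ℕ) :
    adjoinRootEquivLQuot hz n (AdjoinRoot.root _) = clsOf K _ (T 1 - C z) := by
  simp [adjoinRootEquivLQuot]

/-- The basis `1, t - z, …, (t - z) ^ (n - 1)` of `K[t^{±1}]/((t - z) ^ n)`. -/
def lquotBasis {z : K} (hz : z ≠ 0) (n : ℕ) :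
    Module.Basis (Fin n) K (LQuot K ((T 1 - C z) ^ n)) :=
  ((AdjoinRoot.powerBasis' (Polynomial.monic_X_pow n)).map
    (adjoinRootEquivLQuot hz n)).basis.reindex (finCongr (Polynomial.natDegree_X_pow n))

theorem lquotBasis_apply {z : K} (hz : z ≠ 0) (n : ℕ) (i : Fin n) :
    lquotBasis hz n i = clsOf K ((T 1 - C z) ^ n) ((T 1 - C z) ^ (i : ℕ)) := by
  rw [lquotBasis, Module.Basis.reindex_apply, PowerBasis.basis_eq_pow, PowerBasis.map_gen,
    AdjoinRoot.powerBasis'_gen, adjoinRootEquivLQuot_root, clsOf, ← map_pow]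
  rfl

end LQuot

section TensorProduct

open Algebra.TensorProduct (includeLeft includeRight tmul_mul_tmul)

variable {R A₁ A₂ A₃ : Type*} [CommRing R] [CommRing A₁] [Algebra R A₁] [CommRing A₂]
  [Algebra R A₂] [CommRing A₃] [Algebra R A₃]

theorem span_sub_tmul_eq_ideal_span (u₁ : A₁) (u₂ : A₂) (u₃ : A₃) :
    Submodule.span R {w : (A₁ ⊗[R] A₂) ⊗[R] A₃ | ∃ x y z,
        w = (x ⊗ₜ[R] y) ⊗ₜ[R] z - ((u₁ * x) ⊗ₜ[R] (u₂ * y)) ⊗ₜ[R] (u₃ * z)} =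
      (Ideal.span {1 - (u₁ ⊗ₜ[R] u₂) ⊗ₜ[R] u₃}).restrictScalars R := by
  have sub_mul_tmul (x : A₁) (y : A₂) (z : A₃) :
      (1 - (u₁ ⊗ₜ[R] u₂) ⊗ₜ[R] u₃) * ((x ⊗ₜ[R] y) ⊗ₜ[R] z) =
        (x ⊗ₜ[R] y) ⊗ₜ[R] z - ((u₁ * x) ⊗ₜ[R] (u₂ * y)) ⊗ₜ[R] (u₃ * z) := by
    rw [sub_mul, one_mul, tmul_mul_tmul, tmul_mul_tmul]
  apply le_antisymm
  · rw [Submodule.span_le]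
    rintro _ ⟨x, y, z, rfl⟩
    rw [← sub_mul_tmul]
    exact Ideal.mul_mem_right _ _ (Ideal.mem_span_singleton_self _)
  · intro w hw
    obtain ⟨v, rfl⟩ := Ideal.mem_span_singleton.1 hw
    suffices hcomap : (Submodule.span R _).comap
        (LinearMap.mulLeft R (1 - (u₁ ⊗ₜ[R] u₂) ⊗ₜ[R] u₃)) = ⊤ from
      hcomap.ge (Submodule.mem_top (x := v))
    exact eq_top_of_forall_tmul_tmul_mem fun x y z ↦
      Submodule.subset_span ⟨x, y, z, sub_mul_tmul x y z⟩

variable (R) in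
/-- The unit `u₂ ⊗ u₃` of `A₂ ⊗ A₃`. -/
def unitTmul (u₂ : A₂ˣ) (u₃ : A₃ˣ) : (A₂ ⊗[R] A₃)ˣ :=
  Units.map (includeLeft : A₂ →ₐ[R] A₂ ⊗[R] A₃).toMonoidHom u₂ *
    Units.map (includeRight : A₃ →ₐ[R] A₂ ⊗[R] A₃).toMonoidHom u₃

theorem val_unitTmul (u₂ : A₂ˣ) (u₃ : A₃ˣ) :
    (unitTmul R u₂ u₃ : A₂ ⊗[R] A₃) = (u₂ : A₂) ⊗ₜ (u₃ : A₃) := by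
  simp [unitTmul]

end TensorProduct

section HolonomyRing

open Algebra.TensorProduct (includeLeft includeRight productMap tmul_mul_tmul)

variable {K : Type} [Field K] {A₂ A₃ : Type*} [CommRing A₂] [Algebra K A₂] [CommRing A₃]
  [Algebra K A₃] (p : K[T;T⁻¹]) (u₂ : A₂ˣ) (u₃ : A₃ˣ)

/-- The ring `(A₁ ⊗ A₂ ⊗ A₃)/(1 - t ⊗ u₂ ⊗ u₃)`, where `A₁ = K[t^{±1}]/(p)`. For
`A₂ = K[t^{±1}]/(q)`, `A₃ = K[t^{±1}]/(r)` and `u₂ = t`, `u₃ = t` its underlying vector space is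
the quotient by the holonomy subspace. -/
abbrev HolonomyRing : Type _ :=
  ((LQuot K p ⊗[K] A₂) ⊗[K] A₃) ⧸
    Ideal.span {1 - ((lquotT p : LQuot K p) ⊗ₜ[K] (u₂ : A₂)) ⊗ₜ[K] (u₃ : A₃)}

/-- The projection of `A₁ ⊗ A₂ ⊗ A₃` onto `HolonomyRing p u₂ u₃`. -/
def mkHolonomyRing : (LQuot K p ⊗[K] A₂) ⊗[K] A₃ →ₐ[K] HolonomyRing p u₂ u₃ :=
  Ideal.Quotient.mkₐ K _

theorem mkHolonomyRing_lquotT_tmul :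
    mkHolonomyRing p u₂ u₃ (((lquotT p : LQuot K p) ⊗ₜ (u₂ : A₂)) ⊗ₜ (u₃ : A₃)) = 1 := by
  rw [eq_comm, ← sub_eq_zero, ← map_one (mkHolonomyRing p u₂ u₃), ← map_sub]
  exact Ideal.Quotient.mk_singleton_self _

/-- The homomorphism `A₂ ⊗ A₃ → HolonomyRing p u₂ u₃`, `y ⊗ z ↦ 1 ⊗ y ⊗ z`. -/
def toHolonomyRing : A₂ ⊗[K] A₃ →ₐ[K] HolonomyRing p u₂ u₃ :=
  (mkHolonomyRing p u₂ u₃).comp (Algebra.TensorProduct.map includeRight (AlgHom.id K A₃))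

theorem toHolonomyRing_tmul (y : A₂) (z : A₃) :
    toHolonomyRing p u₂ u₃ (y ⊗ₜ z) = mkHolonomyRing p u₂ u₃ ((1 ⊗ₜ y) ⊗ₜ z) :=
  rfl

theorem toHolonomyRing_inv_unitTmul :
    toHolonomyRing p u₂ u₃ ((unitTmul K u₂ u₃)⁻¹ : (A₂ ⊗[K] A₃)ˣ) =
      mkHolonomyRing p u₂ u₃ (((lquotT p : LQuot K p) ⊗ₜ 1) ⊗ₜ 1) := by
  have hmul : toHolonomyRing p u₂ u₃ (unitTmul K u₂ u₃) *
      mkHolonomyRing p u₂ u₃ (((lquotT p : LQuot K p) ⊗ₜ 1) ⊗ₜ 1) = 1 := by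
    rw [val_unitTmul, toHolonomyRing_tmul, ← map_mul, tmul_mul_tmul, tmul_mul_tmul, mul_one,
      mul_one, one_mul, mkHolonomyRing_lquotT_tmul]
  refine left_inv_eq_right_inv ?_ hmul
  rw [← map_mul, Units.inv_mul, map_one]

theorem mkHolonomyRing_mk_tmul_one (x : K[T;T⁻¹]) :
    mkHolonomyRing p u₂ u₃ ((Ideal.Quotient.mk (Ideal.span {p}) x ⊗ₜ 1) ⊗ₜ 1) =
      toHolonomyRing p u₂ u₃ (laurentAeval (unitTmul K u₂ u₃)⁻¹ x) := by
  have hcomp : ((mkHolonomyRing p u₂ u₃).comp includeLeft).comp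
        (includeLeft.comp (Ideal.Quotient.mkₐ K (Ideal.span {p}))) =
      (toHolonomyRing p u₂ u₃).comp (laurentAeval (unitTmul K u₂ u₃)⁻¹) := by
    refine laurent_algHom_ext (S := HolonomyRing p u₂ u₃) ?_
    rw [AlgHom.comp_apply _ (laurentAeval _), laurentAeval_T_one, toHolonomyRing_inv_unitTmul]
    rfl
  exact DFunLike.congr_fun hcomp x

theorem mkHolonomyRing_mk_tmul_tmul (x : K[T;T⁻¹]) (y : A₂) (z : A₃) :
    mkHolonomyRing p u₂ u₃ ((Ideal.Quotient.mk (Ideal.span {p}) x ⊗ₜ y) ⊗ₜ z) =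
      toHolonomyRing p u₂ u₃ (laurentAeval (unitTmul K u₂ u₃)⁻¹ x * (y ⊗ₜ z)) := by
  rw [map_mul, ← mkHolonomyRing_mk_tmul_one, toHolonomyRing_tmul, ← map_mul, tmul_mul_tmul,
    tmul_mul_tmul, mul_one, one_mul, one_mul]

theorem toHolonomyRing_surjective : Function.Surjective (toHolonomyRing p u₂ u₃) := by
  intro v
  obtain ⟨w, rfl⟩ := Ideal.Quotient.mk_surjective v
  suffices hcomap : (toHolonomyRing p u₂ u₃).toLinearMap.range.comap
      (mkHolonomyRing p u₂ u₃).toLinearMap = ⊤ from hcomap.ge (Submodule.mem_top (x := w))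
  refine eq_top_of_forall_tmul_tmul_mem fun x y z ↦ ?_
  obtain ⟨x, rfl⟩ := Ideal.Quotient.mk_surjective x
  exact ⟨_, (mkHolonomyRing_mk_tmul_tmul p u₂ u₃ x y z).symm⟩

variable {p u₂ u₃}

/-- The homomorphism `A₁ ⊗ A₂ ⊗ A₃ → A₂ ⊗ A₃`, `t ⊗ y ⊗ z ↦ (u₂ ⊗ u₃)⁻¹ (y ⊗ z)`, which exists
when `p` vanishes at `(u₂ ⊗ u₃)⁻¹`. -/
def tripleContraction (hp : laurentAeval (unitTmul K u₂ u₃)⁻¹ p = 0) :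
    (LQuot K p ⊗[K] A₂) ⊗[K] A₃ →ₐ[K] A₂ ⊗[K] A₃ :=
  productMap (productMap (lquotLift p _ hp) includeLeft) includeRight

theorem tripleContraction_tmul (hp : laurentAeval (unitTmul K u₂ u₃)⁻¹ p = 0) (x : LQuot K p)
    (y : A₂) (z : A₃) :
    tripleContraction hp ((x ⊗ₜ y) ⊗ₜ z) = lquotLift p _ hp x * (y ⊗ₜ z) := by
  simp [tripleContraction, mul_assoc]

/-- The homomorphism `HolonomyRing p u₂ u₃ → A₂ ⊗ A₃` induced by `tripleContraction`. -/
def holonomyRetraction (hp : laurentAeval (unitTmul K u₂ u₃)⁻¹ p = 0) :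
    HolonomyRing p u₂ u₃ →ₐ[K] A₂ ⊗[K] A₃ :=
  Ideal.Quotient.liftₐ _ (tripleContraction hp) fun w hw ↦ by
    obtain ⟨v, rfl⟩ := Ideal.mem_span_singleton.1 hw
    rw [map_mul, map_sub, map_one, tripleContraction_tmul, lquotLift_lquotT, ← val_unitTmul,
      Units.inv_mul, sub_self, zero_mul]

theorem toHolonomyRing_injective (hp : laurentAeval (unitTmul K u₂ u₃)⁻¹ p = 0) :
    Function.Injective (toHolonomyRing p u₂ u₃) := by
  have hcomp : (holonomyRetraction hp).comp (toHolonomyRing p u₂ u₃) = AlgHom.id K _ :=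
    Algebra.TensorProduct.ext' fun y z ↦ by
      change tripleContraction hp ((1 ⊗ₜ y) ⊗ₜ z) = y ⊗ₜ z
      rw [tripleContraction_tmul, map_one, one_mul]
  exact Function.LeftInverse.injective (g := holonomyRetraction hp) (DFunLike.congr_fun hcomp ·)

end HolonomyRing

section HolSub

variable {K : Type} [Field K] (p q r : K[T;T⁻¹])

theorem holSub_eq_restrictScalars_ideal_span :
    holSub K p q r = (Ideal.span {1 - ((lquotT p : LQuot K p) ⊗ₜ[K] (lquotT q : LQuot K q)) ⊗ₜ[K]
      (lquotT r : LQuot K r)}).restrictScalars K := by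
  rw [← span_sub_tmul_eq_ideal_span, holSub]
  simp only [T_one_smul_eq_lquotT_mul]

/-- The identification of the vector space underlying `HolonomyRing p t t` with the quotient by
the holonomy subspace. -/
def holonomyRingEquiv :
    HolonomyRing p (lquotT q) (lquotT r) ≃ₗ[K] Trip K p q r ⧸ holSub K p q r :=
  (Submodule.Quotient.restrictScalarsEquiv K _).symm ≪≫ₗ
    Submodule.quotEquivOfEq _ _ (holSub_eq_restrictScalars_ideal_span p q r).symm

/-- The linear map sending `y ⊗ z` to the class of `1 ⊗ y ⊗ z` modulo the holonomy subspace. -/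
def toHolSubQuot : LQuot K q ⊗[K] LQuot K r →ₗ[K] Trip K p q r ⧸ holSub K p q r :=
  (holonomyRingEquiv p q r).toLinearMap ∘ₗ
    (toHolonomyRing p (lquotT q) (lquotT r)).toLinearMap

theorem toHolSubQuot_tmul (y : LQuot K q) (z : LQuot K r) :
    toHolSubQuot p q r (y ⊗ₜ z) = Submodule.Quotient.mk ((1 ⊗ₜ y) ⊗ₜ z) :=
  rfl

theorem toHolSubQuot_surjective : Function.Surjective (toHolSubQuot p q r) :=
  (holonomyRingEquiv p q r).surjective.comp (toHolonomyRing_surjective _ _ _)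

theorem toHolSubQuot_injective {p q r : K[T;T⁻¹]}
    (hp : laurentAeval (unitTmul K (lquotT q) (lquotT r))⁻¹ p = 0) :
    Function.Injective (toHolSubQuot p q r) :=
  (holonomyRingEquiv p q r).injective.comp (toHolonomyRing_injective hp)

end HolSub

section Basis

variable {K : Type} [Field K] {z₁ z₂ z₃ : K} {n₁ n₂ n₃ : ℕ}

theorem laurentAeval_inv_unitTmul_eq_zero (hprod : z₁ * z₂ * z₃ = 1) (hn : n₂ + n₃ ≤ n₁ + 1) :
    laurentAeval
      (unitTmul K (lquotT ((T 1 - C z₂) ^ n₂)) (lquotT ((T 1 - C z₃) ^ n₃)))⁻¹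
      ((T 1 - C z₁) ^ n₁ : K[T;T⁻¹]) = 0 := by
  set A₂ := LQuot K ((T 1 - C z₂) ^ n₂)
  set A₃ := LQuot K ((T 1 - C z₃) ^ n₃)
  set t₂ := lquotT ((T 1 - C z₂) ^ n₂)
  set t₃ := lquotT ((T 1 - C z₃) ^ n₃)
  let ι₂ : A₂ →ₐ[K] A₂ ⊗[K] A₃ := Algebra.TensorProduct.includeLeft
  let ι₃ : A₃ →ₐ[K] A₂ ⊗[K] A₃ := Algebra.TensorProduct.includeRight
  have h₂ : (ι₂ t₂ - algebraMap K _ z₂) ^ n₂ = 0 := by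
    rw [← ι₂.commutes, ← map_sub, ← map_pow, ← clsOf_T_one_sub_C, clsOf_T_one_sub_C_pow_self,
      map_zero]
  have h₃ : (ι₃ t₃ - algebraMap K _ z₃) ^ n₃ = 0 := by
    rw [← ι₃.commutes, ← map_sub, ← map_pow, ← clsOf_T_one_sub_C, clsOf_T_one_sub_C_pow_self,
      map_zero]
  rw [map_pow, map_sub, laurentAeval_T_one, laurentAeval_C]
  exact sub_pow_eq_zero_of_mul_mul_eq_one (unitTmul K t₂ t₃).inv_mul
    (by rw [← map_mul, ← map_mul, hprod, map_one]) h₂ h₃ hn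

variable (z₁ z₂ z₃ n₁ n₂ n₃) in
/-- The analogue of `genElt` over an arbitrary field. -/
def genEltOver (k₁ k₂ k₃ : ℕ) :
    Trip K ((T 1 - C z₁) ^ n₁) ((T 1 - C z₂) ^ n₂) ((T 1 - C z₃) ^ n₃) ⧸
      holSub K ((T 1 - C z₁) ^ n₁) ((T 1 - C z₂) ^ n₂) ((T 1 - C z₃) ^ n₃) :=
  Submodule.Quotient.mk
    ((clsOf K ((T 1 - C z₁) ^ n₁) ((T 1 - C z₁) ^ k₁) ⊗ₜ[K]
        clsOf K ((T 1 - C z₂) ^ n₂) ((T 1 - C z₂) ^ k₂)) ⊗ₜ[K]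
      clsOf K ((T 1 - C z₃) ^ n₃) ((T 1 - C z₃) ^ k₃))

theorem toHolSubQuot_comp_tensorProduct_lquotBasis (hz₂ : z₂ ≠ 0) (hz₃ : z₃ ≠ 0) :
    toHolSubQuot ((T 1 - C z₁) ^ n₁) _ _ ∘
        (lquotBasis hz₂ n₂).tensorProduct (lquotBasis hz₃ n₃) =
      fun k : Fin n₂ × Fin n₃ ↦ genEltOver z₁ z₂ z₃ n₁ n₂ n₃ 0 k.1 k.2 := by
  funext k
  rw [Function.comp_apply, Module.Basis.tensorProduct_apply', lquotBasis_apply, lquotBasis_apply,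
    toHolSubQuot_tmul, genEltOver, pow_zero]
  rfl

end Basis

theorem stmt8_general {K : Type} [Field K] (z₁ z₂ z₃ : K) (n₁ n₂ n₃ : ℕ) (hz₂ : z₂ ≠ 0)
    (hz₃ : z₃ ≠ 0) :
    Submodule.span K (Set.range fun k : Fin n₂ × Fin n₃ ↦
        genEltOver z₁ z₂ z₃ n₁ n₂ n₃ 0 k.1 k.2) = ⊤ ∧
      (z₁ * z₂ * z₃ = 1 → n₂ + n₃ ≤ n₁ + 1 →
        LinearIndependent K (fun k : Fin n₂ × Fin n₃ ↦
          genEltOver z₁ z₂ z₃ n₁ n₂ n₃ 0 k.1 k.2) ∧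
        Module.finrank K
          (Trip K ((T 1 - C z₁) ^ n₁) ((T 1 - C z₂) ^ n₂) ((T 1 - C z₃) ^ n₃) ⧸
            holSub K ((T 1 - C z₁) ^ n₁) ((T 1 - C z₂) ^ n₂) ((T 1 - C z₃) ^ n₃)) =
          n₂ * n₃) := by
  let basis₂₃ := (lquotBasis hz₂ n₂).tensorProduct (lquotBasis hz₃ n₃)
  rw [← toHolSubQuot_comp_tensorProduct_lquotBasis hz₂ hz₃]
  refine ⟨?_, fun hprod hn ↦ ?_⟩
  · rw [Set.range_comp, Submodule.span_image, basis₂₃.span_eq, Submodule.map_top,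
      LinearMap.range_eq_top]
    exact toHolSubQuot_surjective _ _ _
  · have hinj := toHolSubQuot_injective (laurentAeval_inv_unitTmul_eq_zero hprod hn)
    refine ⟨basis₂₃.linearIndependent.map' _ (LinearMap.ker_eq_bot.2 hinj), ?_⟩
    rw [← (LinearEquiv.ofBijective _ ⟨hinj, toHolSubQuot_surjective _ _ _⟩).finrank_eq,
      Module.finrank_eq_card_basis basis₂₃, Fintype.card_prod, Fintype.card_fin, Fintype.card_fin]

theorem stmt8 (z₁ z₂ z₃ : ℂ) (hz₁ : z₁ ≠ 0) (hz₂ : z₂ ≠ 0) (hz₃ : z₃ ≠ 0)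
    (hprod : z₁ * z₂ * z₃ = 1) (n₁ n₂ n₃ : ℕ) (hn₃ : 1 ≤ n₃) (hn₂₃ : n₃ ≤ n₂)
    (hn₁₂ : n₂ ≤ n₁) :
    Submodule.span ℂ (Set.range (fun k : Fin n₂ × Fin n₃ =>
        genElt z₁ z₂ z₃ n₁ n₂ n₃ 0 (k.1 : ℕ) (k.2 : ℕ))) = ⊤ ∧
      (n₂ + n₃ ≤ n₁ + 1 →
        LinearIndependent ℂ (fun k : Fin n₂ × Fin n₃ =>
          genElt z₁ z₂ z₃ n₁ n₂ n₃ 0 (k.1 : ℕ) (k.2 : ℕ)) ∧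
        Module.finrank ℂ
          (Trip ℂ ((T 1 - C z₁) ^ n₁) ((T 1 - C z₂) ^ n₂) ((T 1 - C z₃) ^ n₃) ⧸
            holSub ℂ ((T 1 - C z₁) ^ n₁) ((T 1 - C z₂) ^ n₂) ((T 1 - C z₃) ^ n₃)) =
          n₂ * n₃) :=
  (stmt8_general z₁ z₂ z₃ n₁ n₂ n₃ hz₂ hz₃).imp_right fun hbasis ↦ hbasis hprod
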